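/- Let ν¹, ν², ν³, ν⁴ ∈ ℤ₂¹⁶ and ξ = (ν¹, ν², ν³, ν⁴) ∈ ℤ₂⁶⁴. Then the coordinatewise product code ξ·RM(1,6) is a subcode of RM(4,6) = RM(1,6)^⊥ if and only if: (i) ν¹+ν²+ν³+ν⁴ ∈ RM(1,4), (ii) νⁱ+νʲ ∈ RM(1,4)^⊥ for all 1 ≤ i < j ≤ 4, and (iii) each νⁱ has even weight. -/

import Mathlib

def wt {n : ℕ} (v : Fin n → ZMod 2) : ℕ :=
  (Finset.univ.filter fun i => v i ≠ 0).card

def g1 : Fin 16 → ZMod 2 := fun _ => 1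
def g2 : Fin 16 → ZMod 2 := fun i => if i.val < 8 then 1 else 0
def g3 : Fin 16 → ZMod 2 := fun i => if i.val % 8 < 4 then 1 else 0
def g4 : Fin 16 → ZMod 2 := fun i => if i.val % 4 < 2 then 1 else 0
def g5 : Fin 16 → ZMod 2 := fun i => if i.val % 2 = 0 then 1 else 0

/-- The first-order Reed-Muller code RM(1,4) of length 16. -/
def RM14 : Submodule (ZMod 2) (Fin 16 → ZMod 2) :=
  Submodule.span (ZMod 2) {g1, g2, g3, g4, g5}

/-- Four copies of a length-16 word, concatenated. -/
def quad (a : Fin 16 → ZMod 2) : Fin 64 → ZMod 2 :=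
  fun i => a ⟨i.val % 16, Nat.mod_lt _ (by norm_num)⟩

def γ6 : Fin 64 → ZMod 2 := fun i => if i.val / 16 = 1 ∨ i.val / 16 = 3 then 1 else 0
def γ7 : Fin 64 → ZMod 2 := fun i => if 32 ≤ i.val then 1 else 0

/-- The first-order Reed-Muller code RM(1,6) of length 64. -/
def RM16 : Submodule (ZMod 2) (Fin 64 → ZMod 2) :=
  Submodule.span (ZMod 2) ({v | ∃ a ∈ RM14, v = quad a} ∪ {γ6, γ7})

/-- The dual of a binary code with respect to the standard bilinear form. -/
def dual {n : ℕ} (C : Submodule (ZMod 2) (Fin n → ZMod 2)) :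
    Set (Fin n → ZMod 2) :=
  {v | ∀ w ∈ C, ∑ i, v i * w i = 0}

/-- Concatenation of four length-16 words into a length-64 word. -/
def concat4 (a b c d : Fin 16 → ZMod 2) : Fin 64 → ZMod 2 := fun i =>
  if h : i.val < 16 then a ⟨i.val, h⟩
  else if h' : i.val < 32 then b ⟨i.val - 16, by omega⟩
  else if h'' : i.val < 48 then c ⟨i.val - 32, by omega⟩
  else d ⟨i.val - 48, by omega⟩

def dt (a b : Fin 16 → ZMod 2) : ZMod 2 := ∑ i, a i * b i

lemma dt_add_left (a b c : Fin 16 → ZMod 2) : dt (a + b) c = dt a c + dt b c := by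
  simp [dt, add_mul, Finset.sum_add_distrib]
lemma dt_add_right (a b c : Fin 16 → ZMod 2) : dt c (a + b) = dt c a + dt c b := by
  simp [dt, mul_add, Finset.sum_add_distrib]
lemma dt_smul_right (r : ZMod 2) (a c : Fin 16 → ZMod 2) : dt c (r • a) = r * dt c a := by
  simp only [dt, Finset.mul_sum, Pi.smul_apply, smul_eq_mul]
  exact Finset.sum_congr rfl fun i _ => by ring
lemma dt_smul_left (r : ZMod 2) (a c : Fin 16 → ZMod 2) : dt (r • a) c = r * dt a c := by
  simp only [dt, Finset.mul_sum, Pi.smul_apply, smul_eq_mul]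
  exact Finset.sum_congr rfl fun i _ => by ring
lemma dt_zero_right (c : Fin 16 → ZMod 2) : dt c 0 = 0 := by simp [dt]
lemma dt_zero_left (c : Fin 16 → ZMod 2) : dt 0 c = 0 := by simp [dt]

lemma mem_dual_iff (v : Fin 16 → ZMod 2) : v ∈ dual RM14 ↔ ∀ a ∈ RM14, dt v a = 0 := Iff.rfl

lemma wt_iff (v : Fin 16 → ZMod 2) : wt v % 2 = 0 ↔ dt v 1 = 0 := by
  have h : ((wt v : ℕ) : ZMod 2) = dt v 1 := by
    simp only [wt, dt, Finset.card_filter, Nat.cast_sum, Pi.one_apply, mul_one]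
    refine Finset.sum_congr rfl fun i _ => ?_
    generalize v i = x
    revert x; decide
  rw [← h, ZMod.natCast_eq_zero_iff]
  omega

lemma sum64 (f : Fin 64 → ZMod 2) : ∑ i, f i =
    (∑ i : Fin 16, f ⟨i.val, by omega⟩) + (∑ i : Fin 16, f ⟨i.val + 16, by omega⟩)
    + (∑ i : Fin 16, f ⟨i.val + 32, by omega⟩) + (∑ i : Fin 16, f ⟨i.val + 48, by omega⟩) := by
  rw [← Equiv.sum_comp (finProdFinEquiv (m := 4) (n := 16)) f, Fintype.sum_prod_type]
  simp only [Fin.sum_univ_four]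
  rfl

lemma c1 (a b c d : Fin 16 → ZMod 2) (i : Fin 16) :
    concat4 a b c d ⟨i.val, by omega⟩ = a i := by simp [concat4]
lemma c2 (a b c d : Fin 16 → ZMod 2) (i : Fin 16) :
    concat4 a b c d ⟨i.val + 16, by omega⟩ = b i := by
  have := i.2
  simp only [concat4]
  rw [dif_neg (by omega), dif_pos (by omega)]; rfl
lemma c3 (a b c d : Fin 16 → ZMod 2) (i : Fin 16) :
    concat4 a b c d ⟨i.val + 32, by omega⟩ = c i := by
  have := i.2
  simp only [concat4]
  rw [dif_neg (by omega), dif_neg (by omega), dif_pos (by omega)]; rfl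
lemma c4 (a b c d : Fin 16 → ZMod 2) (i : Fin 16) :
    concat4 a b c d ⟨i.val + 48, by omega⟩ = d i := by
  have := i.2
  simp only [concat4]
  rw [dif_neg (by omega), dif_neg (by omega), dif_neg (by omega)]; rfl

def wd (a : Fin 16 → ZMod 2) (s t : ZMod 2) : Fin 64 → ZMod 2 := quad a + s • γ6 + t • γ7

lemma q_lt (k : ℕ) (i : Fin 16) : (i.val + 16 * k) / 16 = k := by omega

lemma wd_eq (a : Fin 16 → ZMod 2) (s t : ZMod 2) :
    wd a s t = concat4 a (a + s • 1) (a + t • 1) (a + s • 1 + t • 1) := by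
  funext i
  obtain ⟨i, hi⟩ := i
  by_cases h1 : i < 16
  · have e1 : i % 16 = i := by omega
    have e2 : i / 16 = 0 := by omega
    have e3 : ¬ 32 ≤ i := by omega
    simp [wd, concat4, quad, γ6, γ7, h1, e1, e2, e3]
  by_cases h2 : i < 32
  · have e1 : i % 16 = i - 16 := by omega
    have e2 : i / 16 = 1 := by omega
    have e3 : ¬ 32 ≤ i := by omega
    simp [wd, concat4, quad, γ6, γ7, h1, h2, e1, e2, e3]
  by_cases h3 : i < 48
  · have e1 : i % 16 = i - 32 := by omega
    have e2 : i / 16 = 2 := by omega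
    have e3 : 32 ≤ i := by omega
    simp [wd, concat4, quad, γ6, γ7, h1, h2, h3, e1, e2, e3]
  · have e1 : i % 16 = i - 48 := by omega
    have e2 : i / 16 = 3 := by omega
    have e3 : 32 ≤ i := by omega
    simp [wd, concat4, quad, γ6, γ7, h1, h2, h3, e1, e2, e3]

lemma wd_mem (a : Fin 16 → ZMod 2) (ha : a ∈ RM14) (s t : ZMod 2) : wd a s t ∈ RM16 := by
  refine add_mem (add_mem ?_ (Submodule.smul_mem _ _ ?_)) (Submodule.smul_mem _ _ ?_) <;>
    apply Submodule.subset_span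
  · exact Or.inl ⟨a, ha, rfl⟩
  · simp
  · simp

lemma mem_wd (v : Fin 64 → ZMod 2) (hv : v ∈ RM16) : ∃ a ∈ RM14, ∃ s t, v = wd a s t := by
  unfold RM16 at hv
  induction hv using Submodule.span_induction with
  | mem x hx =>
    rcases hx with ⟨a, ha, rfl⟩ | rfl | rfl
    · exact ⟨a, ha, 0, 0, by simp [wd]⟩
    · exact ⟨0, zero_mem _, 1, 0, by funext i; simp [wd, quad]⟩
    · exact ⟨0, zero_mem _, 0, 1, by funext i; simp [wd, quad]⟩
  | zero => exact ⟨0, zero_mem _, 0, 0, by funext i; simp [wd, quad]⟩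
  | add x y _ _ hx hy =>
    obtain ⟨a, ha, s, t, rfl⟩ := hx
    obtain ⟨b, hb, s', t', rfl⟩ := hy
    refine ⟨a + b, add_mem ha hb, s + s', t + t', ?_⟩
    funext i; simp [wd, quad]; ring
  | smul r x _ hx =>
    obtain ⟨a, ha, s, t, rfl⟩ := hx
    refine ⟨r • a, Submodule.smul_mem _ _ ha, r * s, r * t, ?_⟩
    funext i; simp [wd, quad]; ring

lemma sum_wd (n1 n2 n3 n4 a b : Fin 16 → ZMod 2) (s t s' t' : ZMod 2) :
    ∑ i, (concat4 n1 n2 n3 n4 * wd a s t) i * wd b s' t' i =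
      dt (n1 + n2 + n3 + n4) (a * b)
      + s * dt (n2 + n4) b + t * dt (n3 + n4) b + s' * dt (n2 + n4) a + t' * dt (n3 + n4) a
      + s * s' * (dt n2 1 + dt n4 1) + t * t' * (dt n3 1 + dt n4 1)
      + (s * t' + t * s') * dt n4 1 := by
  rw [sum64]
  simp only [wd_eq, Pi.mul_apply, c1, c2, c3, c4]
  simp only [dt, Finset.mul_sum, ← Finset.sum_add_distrib]
  refine Finset.sum_congr rfl fun i _ => ?_
  simp only [Pi.add_apply, Pi.smul_apply, Pi.mul_apply, Pi.one_apply, smul_eq_mul]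
  ring

lemma triple (x a b : Fin 16 → ZMod 2) (hx : x ∈ RM14) (ha : a ∈ RM14) (hb : b ∈ RM14) :
    dt x (a * b) = 0 := by
  unfold RM14 at hx ha hb
  induction hx using Submodule.span_induction with
  | zero => simp [dt_zero_left]
  | add x y _ _ hx hy => rw [dt_add_left, hx, hy, add_zero]
  | smul r x _ hx => rw [dt_smul_left, hx, mul_zero]
  | mem x hx =>
  induction ha using Submodule.span_induction with
  | zero => simp [dt_zero_right]
  | add y z _ _ h1 h2 => rw [add_mul, dt_add_right, h1, h2, add_zero]
  | smul r y _ h => rw [smul_mul_assoc, dt_smul_right, h, mul_zero]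
  | mem a ha =>
  induction hb using Submodule.span_induction with
  | zero => simp [dt_zero_right]
  | add y z _ _ h1 h2 => rw [mul_add, dt_add_right, h1, h2, add_zero]
  | smul r y _ h => rw [mul_smul_comm, dt_smul_right, h, mul_zero]
  | mem b hb =>
  rcases hx with rfl | rfl | rfl | rfl | rfl <;> rcases ha with rfl | rfl | rfl | rfl | rfl <;>
    rcases hb with rfl | rfl | rfl | rfl | rfl <;> decide

lemma g_mem : g1 ∈ RM14 ∧ g2 ∈ RM14 ∧ g3 ∈ RM14 ∧ g4 ∈ RM14 ∧ g5 ∈ RM14 := by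
  refine ⟨?_, ?_, ?_, ?_, ?_⟩ <;> apply Submodule.subset_span <;> simp

lemma one_mem14 : (1 : Fin 16 → ZMod 2) ∈ RM14 := g_mem.1

lemma mem_of_perp (x : Fin 16 → ZMod 2) (h : ∀ a ∈ RM14, ∀ b ∈ RM14, dt x (a * b) = 0) :
    x ∈ RM14 := by
  obtain ⟨m1, m2, m3, m4, m5⟩ := g_mem
  have key : x = x 15 • g1 + (x 15 + x 7) • g2 + (x 15 + x 11) • g3 + (x 15 + x 13) • g4
      + (x 15 + x 14) • g5 := by
    have h11 := h _ m1 _ m1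
    have h12 := h _ m1 _ m2
    have h13 := h _ m1 _ m3
    have h14 := h _ m1 _ m4
    have h15 := h _ m1 _ m5
    have h23 := h _ m2 _ m3
    have h24 := h _ m2 _ m4
    have h25 := h _ m2 _ m5
    have h34 := h _ m3 _ m4
    have h35 := h _ m3 _ m5
    have h45 := h _ m4 _ m5
    clear h m1 m2 m3 m4 m5
    simp [dt, Fin.sum_univ_succ, g1, g2, g3, g4, g5] at h11 h12 h13 h14 h15 h23 h24 h25 h34 h35 h45
    funext i
    fin_cases i <;> simp [g1, g2, g3, g4, g5] <;> grind
  rw [key]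
  exact add_mem (add_mem (add_mem (add_mem (Submodule.smul_mem _ _ m1) (Submodule.smul_mem _ _ m2))
    (Submodule.smul_mem _ _ m3)) (Submodule.smul_mem _ _ m4)) (Submodule.smul_mem _ _ m5)

theorem stmt_12 (ν1 ν2 ν3 ν4 : Fin 16 → ZMod 2) :
    (∀ β ∈ RM16, concat4 ν1 ν2 ν3 ν4 * β ∈ dual RM16) ↔
      (ν1 + ν2 + ν3 + ν4 ∈ RM14 ∧
        (ν1 + ν2 ∈ dual RM14 ∧ ν1 + ν3 ∈ dual RM14 ∧ ν1 + ν4 ∈ dual RM14 ∧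
          ν2 + ν3 ∈ dual RM14 ∧ ν2 + ν4 ∈ dual RM14 ∧ ν3 + ν4 ∈ dual RM14) ∧
        (wt ν1 % 2 = 0 ∧ wt ν2 % 2 = 0 ∧ wt ν3 % 2 = 0 ∧ wt ν4 % 2 = 0)) := by
  simp only [wt_iff, mem_dual_iff]
  constructor
  · intro h
    have H : ∀ a ∈ RM14, ∀ b ∈ RM14, ∀ s t s' t', _ := fun a ha b hb s t s' t' =>
      (sum_wd ν1 ν2 ν3 ν4 a b s t s' t').symm.trans (h _ (wd_mem a ha s t) _ (wd_mem b hb s' t'))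
    have z := zero_mem RM14
    have hS : ∀ a ∈ RM14, ∀ b ∈ RM14, dt (ν1 + ν2 + ν3 + ν4) (a * b) = 0 := by
      intro a ha b hb
      simpa using H a ha b hb 0 0 0 0
    have hS1 : ∀ a ∈ RM14, dt (ν1 + ν2 + ν3 + ν4) a = 0 := by
      intro a ha
      simpa using hS a ha 1 one_mem14
    have h24 : ∀ a ∈ RM14, dt (ν2 + ν4) a = 0 := by
      intro a ha
      simpa [dt_zero_right] using H a ha 0 z 0 0 1 0
    have h34 : ∀ a ∈ RM14, dt (ν3 + ν4) a = 0 := by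
      intro a ha
      simpa [dt_zero_right] using H a ha 0 z 0 0 0 1
    have h4 : dt ν4 1 = 0 := by
      simpa [dt_zero_right] using H 0 z 0 z 1 0 0 1
    have o1 := hS1 1 one_mem14
    have o2 := h24 1 one_mem14
    have o3 := h34 1 one_mem14
    simp only [dt_add_left] at hS1 h24 h34 o1 o2 o3 ⊢
    refine ⟨mem_of_perp _ hS, ⟨?_, ?_, ?_, ?_, h24, h34⟩, ?_, ?_, ?_, h4⟩
    all_goals try intro a ha
    all_goals try have p1 := hS1 a ha
    all_goals try have p2 := h24 a ha
    all_goals try have p3 := h34 a ha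
    all_goals clear H h hS hS1 h24 h34
    all_goals grind
  · rintro ⟨hS, ⟨-, -, -, -, h24, h34⟩, -, h2, h3, h4⟩ β hβ w hw
    obtain ⟨a, ha, s, t, rfl⟩ := mem_wd β hβ
    obtain ⟨b, hb, s', t', rfl⟩ := mem_wd w hw
    rw [sum_wd, triple _ _ _ hS ha hb, h24 a ha, h24 b hb, h34 a ha, h34 b hb, h2, h3, h4]
    simp
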